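/- Let n = p₁⋯p_r ∈ A be square-free monic with distinct monic irreducible factors p_i, and let ζ_i ∈ L be a fixed root of p_i. Then for all nonnegative integers m₁, …, m_r, the sum ∑_{a ∈ A, deg a < deg n} ∏_{i=1}^r a(ζ_i)^{m_i} (computed in L, with the convention 0⁰ = 1) equals (−1)^r if for every i the exponent m_i is a positive multiple of |p_i| − 1, and equals 0 otherwise. -/

import Mathlib

open Polynomial

noncomputable section

/-- The polynomial of degree `< d` with coefficient vector `c : Fin d → F`.
As `c` ranges over all of `Fin d → F`, this ranges exactly over the polynomials
of degree `< d` (each exactly once). -/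
def toPoly {F : Type} [Field F] {d : ℕ} (c : Fin d → F) : Polynomial F :=
  ∑ i : Fin d, Polynomial.C (c i) * Polynomial.X ^ (i : ℕ)

lemma toPoly_degree_lt {F : Type} [Field F] {d : ℕ} (c : Fin d → F) :
    (toPoly c).degree < d := by
  unfold toPoly
  refine (Polynomial.degree_sum_le _ _).trans_lt ?_
  rw [Finset.sup_lt_iff (by exact WithBot.bot_lt_coe d)]
  intro i _
  refine (Polynomial.degree_C_mul_X_pow_le _ _).trans_lt ?_
  exact_mod_cast i.2

lemma toPoly_coeff {F : Type} [Field F] {d : ℕ} (c : Fin d → F) (j : Fin d) :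
    (toPoly c).coeff j = c j := by
  unfold toPoly
  rw [Polynomial.finsetSum_coeff]
  simp only [Polynomial.coeff_C_mul_X_pow]
  rw [Finset.sum_eq_single j]
  · simp
  · intro b _ hb
    rw [if_neg]
    intro h
    exact hb (Fin.ext h.symm)
  · simp

lemma field_sum_pow {K : Type} [Field K] [Fintype K] (m : ℕ) :
    ∑ x : K, x ^ m = if 0 < m ∧ (Fintype.card K - 1) ∣ m then (-1 : K) else 0 := by
  classical
  rcases Nat.eq_zero_or_pos m with rfl | hm
  · simp
  · have h := FiniteField.sum_pow_units K m
    rw [← Finset.add_sum_erase _ _ (Finset.mem_univ (0 : K)), zero_pow hm.ne', zero_add]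
    simp only [hm, true_and]
    rw [← h]
    symm
    refine Finset.sum_bij (fun x _ => (x : K)) ?_ ?_ ?_ ?_
    · intro x _; simp
    · intro x _ y _ hxy; exact Units.ext hxy
    · intro b hb
      exact ⟨Units.mk0 b (Finset.ne_of_mem_erase hb), Finset.mem_univ _, rfl⟩
    · intro x _; simp

/-- For square-free monic `n = p₁⋯p_r` with roots `ζ_i` of the `p_i`, the sum
`∑_{deg a < deg n} ∏_i a(ζ_i)^{m_i}` equals `(−1)^r` if every `m_i` is a positive
multiple of `|p_i| − 1`, and `0` otherwise. -/
theorem stmt5 {F : Type} [Field F] [Fintype F] {L : Type} [Field L] [Algebra F L]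
    {r : ℕ} (p : Fin r → Polynomial F) (ζ : Fin r → L)
    (hp : ∀ i, (p i).Monic ∧ Irreducible (p i))
    (hdist : ∀ i i', i ≠ i' → p i ≠ p i')
    (hζ : ∀ i, Polynomial.aeval (ζ i) (p i) = 0)
    (n : Polynomial F) (hn : n = ∏ i, p i)
    (m : Fin r → ℕ) :
    ∑ c : Fin n.natDegree → F, ∏ i, Polynomial.aeval (ζ i) (toPoly c) ^ m i
      = if ∀ i, 0 < m i ∧ (Fintype.card F ^ (p i).natDegree - 1) ∣ m i
        then (-1 : L) ^ r else 0 := by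
  classical
  have : ∀ i, Fact (Irreducible (p i)) := fun i => ⟨(hp i).2⟩
  have hfin : ∀ i, Module.Finite F (AdjoinRoot (p i)) := fun i =>
    (AdjoinRoot.powerBasis (hp i).2.ne_zero).finite
  have : ∀ i, Finite (AdjoinRoot (p i)) := fun i => by
    have := hfin i
    exact Module.finite_of_finite F
  let : ∀ i, Fintype (AdjoinRoot (p i)) := fun i => Fintype.ofFinite _
  have hcard : ∀ i, Fintype.card (AdjoinRoot (p i)) = Fintype.card F ^ (p i).natDegree := by
    intro i
    have := hfin i
    rw [Module.card_eq_pow_finrank (K := F) (V := AdjoinRoot (p i)),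
      (AdjoinRoot.powerBasis (hp i).2.ne_zero).finrank, AdjoinRoot.powerBasis_dim]
  let σ : ∀ i, AdjoinRoot (p i) →+* L := fun i =>
    AdjoinRoot.lift (algebraMap F L) (ζ i) (by simpa [Polynomial.aeval_def] using hζ i)
  have hσ : ∀ i (f : Polynomial F), σ i (AdjoinRoot.mk (p i) f) = Polynomial.aeval (ζ i) f := by
    intro i f
    rw [Polynomial.aeval_def]
    exact AdjoinRoot.lift_mk _ f
  let φ : (Fin n.natDegree → F) → (∀ i, AdjoinRoot (p i)) :=
    fun c i => AdjoinRoot.mk (p i) (toPoly c)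
  have hnm : n.Monic := by
    rw [hn]; exact Polynomial.monic_prod_of_monic _ _ fun i _ => (hp i).1
  have hinj : Function.Injective φ := by
    intro c c' h
    have hd : n ∣ toPoly c - toPoly c' := by
      refine (dvd_of_eq hn).trans (Finset.prod_dvd_of_coprime ?_ ?_)
      · intro i _ j _ hij
        rcases (EuclideanDomain.dvd_or_coprime (p i) (p j) (hp i).2).symm with h1 | h1
        · exact h1
        · exact absurd (Polynomial.eq_of_monic_of_associated (hp i).1 (hp j).1
            ((hp i).2.associated_of_dvd (hp j).2 h1)) (hdist i j hij)
      · intro i _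
        exact AdjoinRoot.mk_eq_mk.mp (congrFun h i)
    have h0 : toPoly c - toPoly c' = 0 := by
      refine Polynomial.eq_zero_of_dvd_of_degree_lt hd ?_
      rw [Polynomial.degree_eq_natDegree hnm.ne_zero]
      exact (Polynomial.degree_sub_le _ _).trans_lt
        (max_lt (toPoly_degree_lt c) (toPoly_degree_lt c'))
    funext j
    rw [← toPoly_coeff c j, ← toPoly_coeff c' j, sub_eq_zero.mp h0]
  have hbij : Function.Bijective φ := by
    rw [Fintype.bijective_iff_injective_and_card]
    refine ⟨hinj, ?_⟩
    rw [Fintype.card_fun, Fintype.card_fin, Fintype.card_pi]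
    simp only [hcard]
    rw [Finset.prod_pow_eq_pow_sum, hn,
      Polynomial.natDegree_prod_of_monic _ _ fun i _ => (hp i).1]
  have h1 : ∑ c : Fin n.natDegree → F, ∏ i, Polynomial.aeval (ζ i) (toPoly c) ^ m i
      = ∑ x : ∀ i, AdjoinRoot (p i), ∏ i, σ i (x i) ^ m i := by
    refine Fintype.sum_bijective φ hbij _ _ ?_
    intro c
    simp only [φ, hσ]
  have h2 : ∀ i, ∑ x : AdjoinRoot (p i), σ i x ^ m i
      = if 0 < m i ∧ (Fintype.card F ^ (p i).natDegree - 1) ∣ m i then (-1 : L) else 0 := by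
    intro i
    have := congrArg (σ i) (field_sum_pow (K := AdjoinRoot (p i)) (m i))
    rw [map_sum, hcard] at this
    simp only [map_pow] at this
    rw [this]
    split_ifs <;> simp
  have h3 := Fintype.prod_sum (fun i (x : AdjoinRoot (p i)) => σ i x ^ m i)
  rw [h1, ← h3]
  simp only [h2]
  split_ifs with h
  · rw [Finset.prod_congr rfl fun i _ => if_pos (h i)]
    simp
  · push Not at h
    obtain ⟨i, hi⟩ := h
    refine Finset.prod_eq_zero (Finset.mem_univ i) ?_
    rw [if_neg]
    rintro ⟨ha, hb⟩
    exact hi ha hb
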